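/- arXiv:math/9911115 — 6 statements merged into one kernel-verified Lean document; each statement's English description precedes it below -/
import Mathlib

section
/- Let X : ℕ → ℤ be a nearest-neighbour path started at zero, and for n ≥ 1 let L_n be the number of indices k with 0 ≤ k < n such that both X_k ∈ {0, −1} and X_{k+1} ∈ {0, −1} (with L_0 = 0). Then for every n ≥ 0 the discrete Tanaka formula holds: |X_n + 1/2| − 1/2 = Σ_{k=0}^{n−1} sgn(X_k)(X_{k+1} − X_k) + L_n; equivalently, in integer form, |2·X_n + 1| − 1 = 2·(Σ_{k=0}^{n−1} sgn(X_k)(X_{k+1} − X_k) + L_n). -/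
/-!
A nearest-neighbour step leaves `|2 * X k + 1|` unchanged exactly when it crosses the edge between
`0` and `-1`; any other step stays on one side of `-1/2` and changes it by
`2 * sgn (X k) * (X (k + 1) - X k)`. On a crossing step `sgn (X k) * (X (k + 1) - X k) = -1`, which
is compensated by the increment of `L`. Summing these one-step identities gives the integer form,
and dividing it by two gives the rational form.
-/

/-- The sign function: `sgn a = 1` if `a ≥ 0` and `-1` if `a < 0`. -/
def sgn (a : ℤ) : ℤ := if 0 ≤ a then 1 else -1

theorem abs_two_mul_add_one_step (a b : ℤ) (h : |b - a| = 1) :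
    |2 * b + 1| = |2 * a + 1| + 2 * (sgn a * (b - a) +
      if (a = 0 ∨ a = -1) ∧ (b = 0 ∨ b = -1) then 1 else 0) := by
  unfold sgn
  rcases (abs_eq (by norm_num)).1 h with h | h <;> rw [h] <;> split_ifs <;> grind

/-- Discrete Tanaka formula for a nearest-neighbour path started at zero. -/
theorem discrete_tanaka_formula
    (X : ℕ → ℤ) (hX0 : X 0 = 0) (hstep : ∀ k, |X (k + 1) - X k| = 1)
    (L : ℕ → ℤ)
    (hL : ∀ n, L n = ((Finset.range n).filter
      (fun k => (X k = 0 ∨ X k = -1) ∧ (X (k + 1) = 0 ∨ X (k + 1) = -1))).card) :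
    ∀ n : ℕ,
      (|(X n : ℚ) + 1 / 2| - 1 / 2
        = ∑ k ∈ Finset.range n, (sgn (X k) * (X (k + 1) - X k) : ℚ) + (L n : ℚ)) ∧
      |2 * X n + 1| - 1
        = 2 * (∑ k ∈ Finset.range n, sgn (X k) * (X (k + 1) - X k) + L n) := by
  intro n
  have key : |2 * X n + 1| - 1
      = 2 * (∑ k ∈ Finset.range n, sgn (X k) * (X (k + 1) - X k) + L n) := by
    rw [hL, Finset.card_filter]
    push_cast
    induction n with
    | zero => simp [hX0]
    | succ n ih =>
      rw [Finset.sum_range_succ, Finset.sum_range_succ, abs_two_mul_add_one_step _ _ (hstep n)]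
      linarith
  refine ⟨?_, key⟩
  have hq : |2 * (X n : ℚ) + 1| - 1
      = 2 * (∑ k ∈ Finset.range n, (sgn (X k) * (X (k + 1) - X k) : ℚ) + (L n : ℚ)) := by
    exact_mod_cast key
  have h2 : |2 * (X n : ℚ) + 1| = 2 * |(X n : ℚ) + 1 / 2| := by
    rw [show 2 * (X n : ℚ) + 1 = 2 * ((X n : ℚ) + 1 / 2) by ring, abs_mul, abs_two]
  linarith
end

section
/- Let X : ℕ → ℤ be a nearest-neighbour path started at zero, let Z be its Z-transform, and for n ≥ 1 let L_n be the number of indices k with 0 ≤ k < n such that both X_k ∈ {0, −1} and X_{k+1} ∈ {0, −1} (with L_0 = 0). Then for every n ≥ 0, L_n = max_{0 ≤ k ≤ n} (−Z_k); that is, the discrete local time at zero of X equals the running maximum of −Z. -/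
/-- The distance from `a` to the set `{0, -1}`. -/
def distZeroNegOne (a : ℤ) : ℤ := if 0 ≤ a then a else -1 - a

/-- One unit if the step from `a` to `b` stays in `{0, -1}`, and zero otherwise: the increment
of the local time. -/
def localTimeStep (a b : ℤ) : ℤ := if (a = 0 ∨ a = -1) ∧ (b = 0 ∨ b = -1) then 1 else 0

/-- The discrete Tanaka formula for a single step. -/
theorem tanaka_step {a b : ℤ} (hab : |b - a| = 1) :
    sgn a * (b - a) + localTimeStep a b = distZeroNegOne b - distZeroNegOne a := by
  unfold sgn localTimeStep distZeroNegOne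
  rcases (abs_eq (by norm_num)).1 hab with h | h <;> split_ifs <;> omega

/-- The discrete Tanaka formula. -/
theorem transform_add_count {X Z L : ℕ → ℤ} (hX0 : X 0 = 0)
    (hstep : ∀ k, |X (k + 1) - X k| = 1) (hZ0 : Z 0 = 0)
    (hZ : ∀ k, Z (k + 1) - Z k = sgn (X k) * (X (k + 1) - X k)) (hL0 : L 0 = 0)
    (hL : ∀ n, L (n + 1) = L n + localTimeStep (X n) (X (n + 1))) (n : ℕ) :
    Z n + L n = distZeroNegOne (X n) := by
  induction n with
  | zero => simp [hX0, hZ0, hL0, distZeroNegOne]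
  | succ n ih =>
    have := tanaka_step (hstep n)
    linarith [hZ n, hL n]

/-- The discrete local time at zero of a nearest-neighbour path `X` equals the running
maximum of `-Z`, where `Z` is the Z-transform of `X`. -/
theorem local_time_eq_running_max
    (X Z : ℕ → ℤ) (hX0 : X 0 = 0) (hstep : ∀ k, |X (k + 1) - X k| = 1)
    (hZ0 : Z 0 = 0) (hZ : ∀ k, Z (k + 1) - Z k = sgn (X k) * (X (k + 1) - X k))
    (L : ℕ → ℤ)
    (hL : ∀ n, L n = ((Finset.range n).filter
      (fun k => (X k = 0 ∨ X k = -1) ∧ (X (k + 1) = 0 ∨ X (k + 1) = -1))).card) :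
    ∀ n : ℕ, L n = (Finset.range (n + 1)).sup' (by simp) (fun k => -Z k) := by
  have hL0 : L 0 = 0 := by simp [hL]
  have hLs : ∀ n, L (n + 1) = L n + localTimeStep (X n) (X (n + 1)) := by
    intro n
    rw [hL, hL, Finset.range_add_one, Finset.filter_insert, localTimeStep]
    split_ifs <;> simp
  have key := transform_add_count hX0 hstep hZ0 hZ hL0 hLs
  intro n
  induction n with
  | zero => simp [hL0, hZ0]
  | succ n ih =>
    have hmax : (Finset.range (n + 1 + 1)).sup' (by simp) (fun k => -Z k)
        = max (-Z (n + 1)) ((Finset.range (n + 1)).sup' (by simp) (fun k => -Z k)) := by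
      simp only [Finset.range_add_one (n := n + 1)]
      exact Finset.sup'_insert _ _
    rw [hmax, ← ih]
    have h1 := hLs n
    have h2 := key (n + 1)
    unfold localTimeStep at h1
    unfold distZeroNegOne at h2
    split_ifs at h1 h2 <;> omega
end

section
/- Let X : ℕ → ℤ be a nearest-neighbour path started at zero and let Z be its Z-transform. Then for every n ≥ 0: |X_n + 1/2| − 1/2 = Z_n + max_{0 ≤ k ≤ n} (−Z_k); equivalently, in integer form, |2·X_n + 1| − 1 = 2·(Z_n + max_{0 ≤ k ≤ n} (−Z_k)). -/
lemma sup'_range_step {α : Type*} [LinearOrder α] (f : ℕ → α) (n : ℕ) :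
    (Finset.range (n + 1 + 1)).sup' (by simp) f
      = max ((Finset.range (n + 1)).sup' (by simp) f) (f (n + 1)) := by
  simp only [Finset.range_add_one (n := n + 1)]
  rw [Finset.sup'_insert, max_comm]

/-- Integer form of the identity. In the inductive step the induction hypothesis determines the
running maximum `M`, so the claim reduces to linear arithmetic in `X n`, `Z n` and their steps. -/
lemma tanaka_int (X Z : ℕ → ℤ) (hX0 : X 0 = 0) (hstep : ∀ k, |X (k + 1) - X k| = 1)
    (hZ0 : Z 0 = 0) (hZ : ∀ k, Z (k + 1) - Z k = sgn (X k) * (X (k + 1) - X k)) (n : ℕ) :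
    |2 * X n + 1| - 1
      = 2 * (Z n + (Finset.range (n + 1)).sup' (by simp) (fun k => -Z k)) := by
  induction n with
  | zero => simp [hX0, hZ0]
  | succ n ih =>
    rw [sup'_range_step]
    generalize (Finset.range (n + 1)).sup' _ (fun k => -Z k) = M at ih ⊢
    have h1 := hstep n
    have h2 := hZ n
    unfold sgn at h2
    split_ifs at h2 <;> grind

/-- Discrete version of Tanaka's identity `|X| = Z + sup(-Z)`:
for a nearest-neighbour path `X` started at zero with Z-transform `Z`,
`|X_n + 1/2| - 1/2 = Z_n + max_{0 ≤ k ≤ n} (-Z_k)`. -/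
theorem discrete_tanaka_sup_formula
    (X Z : ℕ → ℤ) (hX0 : X 0 = 0) (hstep : ∀ k, |X (k + 1) - X k| = 1)
    (hZ0 : Z 0 = 0) (hZ : ∀ k, Z (k + 1) - Z k = sgn (X k) * (X (k + 1) - X k)) :
    ∀ n : ℕ,
      (|(X n : ℚ) + 1 / 2| - 1 / 2
        = (Z n : ℚ) + ((Finset.range (n + 1)).sup' (by simp) (fun k => -Z k) : ℚ)) ∧
      |2 * X n + 1| - 1
        = 2 * (Z n + (Finset.range (n + 1)).sup' (by simp) (fun k => -Z k)) := by
  intro n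
  have h := tanaka_int X Z hX0 hstep hZ0 hZ n
  refine ⟨?_, h⟩
  have hcast : ((Finset.range (n + 1)).sup' (by simp) (fun k => -(Z k : ℚ)))
      = (((Finset.range (n + 1)).sup' (by simp) (fun k => -Z k) : ℤ) : ℚ) := by
    rw [Finset.apply_sup'_eq_sup'_comp _ (fun z : ℤ => (z : ℚ)) (fun x y => Int.cast_max)]
    simp
  have hq : |2 * (X n : ℚ) + 1| - 1 = 2 * ((Z n : ℚ)
      + (((Finset.range (n + 1)).sup' (by simp) (fun k => -Z k) : ℤ) : ℚ)) := by
    exact_mod_cast h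
  have habs : |2 * (X n : ℚ) + 1| = 2 * |(X n : ℚ) + 1 / 2| := by
    rw [show 2 * (X n : ℚ) + 1 = 2 * ((X n : ℚ) + 1 / 2) by ring, abs_mul, abs_two]
  rw [hcast]
  linarith
end

section
/- Let X : ℕ → ℤ be a nearest-neighbour path started at zero, let Z be its Z-transform, fix n ≥ 0, and let r be the largest index in {0, 1, …, n} such that Z_r = min_{0 ≤ j ≤ r} Z_j (equivalently Z_r = −sup_{k ≤ r}(−Z_k)). Then X_n ≥ 0 if and only if r is even, and X_n < 0 if and only if r is odd. (In the paper's phrasing: if r is even then X_n + 1/2 is positive, and if r is odd then X_n + 1/2 is negative.) -/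
/-- The integer `|a + 1/2| - 1/2`: the distance of `a` to the nearer point of `{0, -1}`. -/
def foldedHeight (a : ℤ) : ℤ := if 0 ≤ a then a else -a - 1

/-- The discrete Skorokhod reflection identity `foldedHeight (X k) = Z k - min_{j ≤ k} Z j`. -/
lemma runningMin_eq
    (X Z : ℕ → ℤ) (hX0 : X 0 = 0) (hstep : ∀ k, |X (k + 1) - X k| = 1)
    (hZ : ∀ k, Z (k + 1) - Z k = sgn (X k) * (X (k + 1) - X k)) (k : ℕ) :
    (Finset.range (k + 1)).inf' (by simp) Z = Z k - foldedHeight (X k) := by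
  have key : (∀ j ≤ k, Z k - foldedHeight (X k) ≤ Z j) ∧
      ∃ j ≤ k, Z j = Z k - foldedHeight (X k) := by
    induction k with
    | zero => simp [foldedHeight, hX0]
    | succ k ih =>
      obtain ⟨hlb, j, hj, hjeq⟩ := ih
      have hs := hstep k
      have hz := hZ k
      -- Either the reflected level is unchanged, or `X` crosses and `Z` itself is a new minimum.
      have hcases : Z (k + 1) - foldedHeight (X (k + 1)) = Z k - foldedHeight (X k) ∨
          (foldedHeight (X (k + 1)) = 0 ∧ Z (k + 1) ≤ Z k - foldedHeight (X k)) := by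
        rcases (abs_eq one_pos.le).mp hs with h | h <;> rw [h] at hz <;>
          unfold sgn at hz <;> unfold foldedHeight <;> split_ifs at * <;> omega
      have hnonneg : 0 ≤ foldedHeight (X (k + 1)) := by
        unfold foldedHeight; split_ifs <;> omega
      rcases hcases with h | ⟨h0, h⟩
      · refine ⟨fun i hi => ?_, j, by omega, by omega⟩
        rcases Nat.le_or_eq_of_le_succ hi with hi | hi
        · have := hlb i hi; omega
        · subst hi; simp only [Nat.succ_eq_add_one]; omega
      · refine ⟨fun i hi => ?_, k + 1, le_rfl, by omega⟩
        rcases Nat.le_or_eq_of_le_succ hi with hi | hi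
        · have := hlb i hi; omega
        · subst hi; simp only [Nat.succ_eq_add_one]; omega
  obtain ⟨hlb, j, hj, hjeq⟩ := key
  apply le_antisymm
  · rw [← hjeq]
    exact Finset.inf'_le Z (Finset.mem_range.mpr (by omega))
  · exact Finset.le_inf' _ _ fun i hi => hlb i (by have := Finset.mem_range.mp hi; omega)

lemma path_emod_two (X : ℕ → ℤ) (hX0 : X 0 = 0) (hstep : ∀ k, |X (k + 1) - X k| = 1) (k : ℕ) :
    X k % 2 = (k : ℤ) % 2 := by
  induction k with
  | zero => simp [hX0]
  | succ k ih =>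
    rcases (abs_eq one_pos.le).mp (hstep k) with h | h <;> push_cast <;> omega

/-- The sign of `X_n` is coded by the parity of the last time `r ≤ n` at which the
Z-transform `Z` attains its running minimum: `X_n ≥ 0` iff `r` is even, and
`X_n < 0` iff `r` is odd. -/
theorem sign_coded_by_parity_of_last_min
    (X Z : ℕ → ℤ) (hX0 : X 0 = 0) (hstep : ∀ k, |X (k + 1) - X k| = 1)
    (hZ0 : Z 0 = 0) (hZ : ∀ k, Z (k + 1) - Z k = sgn (X k) * (X (k + 1) - X k))
    (n r : ℕ) (hrn : r ≤ n)
    (hrmin : Z r = (Finset.range (r + 1)).inf' (by simp) Z)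
    (hrlast : ∀ k, r < k → k ≤ n → Z k ≠ (Finset.range (k + 1)).inf' (by simp) Z) :
    (0 ≤ X n ↔ Even r) ∧ (X n < 0 ↔ Odd r) := by
  have hmin := runningMin_eq X Z hX0 hstep hZ
  have hr : foldedHeight (X r) = 0 := by
    have := hmin r
    omega
  have hlast : ∀ k, r < k → k ≤ n → foldedHeight (X k) ≠ 0 := by
    intro k h1 h2 h3
    exact hrlast k h1 h2 (by rw [hmin k, h3, sub_zero])
  have hsign : ∀ m, r ≤ m → m ≤ n → (0 ≤ X m ↔ 0 ≤ X r) := by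
    intro m hm
    induction m, hm using Nat.le_induction with
    | base => intro _; rfl
    | succ m hm ih =>
      intro hmn
      rw [← ih (by omega)]
      have hne := hlast (m + 1) (by omega) hmn
      unfold foldedHeight at hne
      rcases (abs_eq one_pos.le).mp (hstep m) with h | h <;> split_ifs at hne <;> omega
  have hn := hsign n hrn le_rfl
  have hpar := path_emod_two X hX0 hstep r
  rw [Nat.even_iff, Nat.odd_iff]
  unfold foldedHeight at hr
  split_ifs at hr <;> omega
end

section
/- Let Z and Z′ be two nearest-neighbour paths started at zero, and let X and X′ be the nearest-neighbour paths obtained from them by the recursions X_{k+1} = X_k + sgn(X_k)(Z_{k+1} − Z_k) and X′_{k+1} = X′_k + sgn(X′_k)(Z′_{k+1} − Z′_k), with X_0 = X′_0 = 0. Fix n ≥ 0, let r be the largest index in {0,…,n} with Z_r = min_{0 ≤ j ≤ r} Z_j, and let r′ be the largest index in {0,…,n} with Z′_{r′} = min_{0 ≤ j ≤ r′} Z′_j. If r = r′, then sgn(X_n) = sgn(X′_n). -/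
/-- The running minimum `min_{0 ≤ j ≤ k} Z j`. -/
def runMin (Z : ℕ → ℤ) (k : ℕ) : ℤ := (Finset.range (k + 1)).inf' (by simp) Z

theorem runMin_succ (Z : ℕ → ℤ) (k : ℕ) : runMin Z (k + 1) = min (Z (k + 1)) (runMin Z k) := by
  unfold runMin
  simp only [Finset.range_add_one (n := k + 1)]
  rw [Finset.inf'_insert]

/-- The integer `|a + 1/2| - 1/2`, which identifies `a` with its mirror image `-1 - a`. -/
def reflect (a : ℤ) : ℤ := if 0 ≤ a then a else -1 - a

theorem step_cases {Z : ℕ → ℤ} (hZ : ∀ k, |Z (k + 1) - Z k| = 1) (k : ℕ) :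
    Z (k + 1) = Z k + 1 ∨ Z (k + 1) = Z k - 1 := by
  rcases (abs_eq zero_le_one).mp (hZ k) with h | h <;> omega

theorem reflect_eq_sub_runMin {Z X : ℕ → ℤ} (hZ : ∀ k, |Z (k + 1) - Z k| = 1)
    (hX0 : X 0 = 0) (hX : ∀ k, X (k + 1) = X k + sgn (X k) * (Z (k + 1) - Z k)) (k : ℕ) :
    reflect (X k) = Z k - runMin Z k := by
  induction k with
  | zero => simp [hX0, reflect, runMin]
  | succ k ih =>
    have hk := hX k
    rw [runMin_succ]
    unfold reflect sgn at *
    rcases step_cases hZ k with h | h <;> split_ifs at * <;> omega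

theorem emod_two_eq {Z X : ℕ → ℤ} (hZ : ∀ k, |Z (k + 1) - Z k| = 1)
    (hX0 : X 0 = 0) (hX : ∀ k, X (k + 1) = X k + sgn (X k) * (Z (k + 1) - Z k)) (k : ℕ) :
    X k % 2 = (k : ℤ) % 2 := by
  induction k with
  | zero => simp [hX0]
  | succ k ih =>
    have hk := hX k
    unfold sgn at hk
    rcases step_cases hZ k with h | h <;> split_ifs at hk <;> omega

/-- The sign of the solution at time `n` is the parity of the last time `r ≤ n` at which the
driving path is at its running minimum. -/
theorem sgn_eq_neg_one_pow {Z X : ℕ → ℤ} (hZ : ∀ k, |Z (k + 1) - Z k| = 1)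
    (hX0 : X 0 = 0) (hX : ∀ k, X (k + 1) = X k + sgn (X k) * (Z (k + 1) - Z k))
    {n r : ℕ} (hrn : r ≤ n) (hr : Z r = runMin Z r)
    (hlast : ∀ k, r < k → k ≤ n → Z k ≠ runMin Z k) :
    sgn (X n) = (-1) ^ r := by
  induction n, hrn using Nat.le_induction with
  | base =>
    have h1 := reflect_eq_sub_runMin hZ hX0 hX r
    have h2 := emod_two_eq hZ hX0 hX r
    unfold reflect at h1
    unfold sgn
    rcases Nat.even_or_odd r with he | ho
    · rw [he.neg_one_pow]
      obtain ⟨c, hc⟩ := he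
      split_ifs at * <;> omega
    · rw [ho.neg_one_pow]
      obtain ⟨c, hc⟩ := ho
      split_ifs at * <;> omega
  | succ n hn ih =>
    rw [← ih fun k h1 h2 => hlast k h1 (by omega)]
    -- A sign change between `n` and `n + 1` would force `X (n + 1) ∈ {0, -1}`.
    have h1 := reflect_eq_sub_runMin hZ hX0 hX (n + 1)
    have h2 := hlast (n + 1) (by omega) le_rfl
    have hk := hX n
    unfold reflect at h1
    unfold sgn at *
    rcases step_cases hZ n with h | h <;> split_ifs at * <;> omega

/-- If the driving paths `Z` and `Z'` attain their (last) running minima at the same time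
`r = r'` in `{0, …, n}`, then the corresponding solutions of the discrete Tanaka
equation have the same sign at time `n`. -/
theorem sign_eq_of_last_min_eq
    (Z Z' X X' : ℕ → ℤ)
    (hZ0 : Z 0 = 0) (hZstep : ∀ k, |Z (k + 1) - Z k| = 1)
    (hZ'0 : Z' 0 = 0) (hZ'step : ∀ k, |Z' (k + 1) - Z' k| = 1)
    (hX0 : X 0 = 0) (hX : ∀ k, X (k + 1) = X k + sgn (X k) * (Z (k + 1) - Z k))
    (hX'0 : X' 0 = 0) (hX' : ∀ k, X' (k + 1) = X' k + sgn (X' k) * (Z' (k + 1) - Z' k))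
    (n r r' : ℕ) (hrn : r ≤ n) (hr'n : r' ≤ n)
    (hrmin : Z r = (Finset.range (r + 1)).inf' (by simp) Z)
    (hrlast : ∀ k, r < k → k ≤ n → Z k ≠ (Finset.range (k + 1)).inf' (by simp) Z)
    (hr'min : Z' r' = (Finset.range (r' + 1)).inf' (by simp) Z')
    (hr'last : ∀ k, r' < k → k ≤ n → Z' k ≠ (Finset.range (k + 1)).inf' (by simp) Z')
    (hrr' : r = r') :
    sgn (X n) = sgn (X' n) := by
  subst hrr'
  rw [sgn_eq_neg_one_pow hZstep hX0 hX hrn hrmin hrlast,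
    sgn_eq_neg_one_pow hZ'step hX'0 hX' hr'n hr'min hr'last]
end

section
/- The Itô excursion entrance law is an entrance law for Brownian motion killed at 0: for all real numbers s, t with 0 < s < t and all y > 0, ∫_0^∞ (g_{t−s}(y − x) − g_{t−s}(y + x)) · x · s^{−3/2} · exp(−x²/(2s)) dx = y · t^{−3/2} · exp(−y²/(2t)), where g_h(u) = (2πh)^{−1/2} exp(−u²/(2h)) is the centered Gaussian density with variance h. Equivalently, writing λ_t(x) = x t^{−3/2} exp(−x²/(2t)) for the entrance-law density and q_h(x, y) = g_h(y − x) − g_h(y + x) for the transition density of Brownian motion killed on hitting 0, one has ∫_0^∞ q_{t−s}(x, y) λ_s(x) dx = λ_t(y). -/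
/-!
The integrand `q_{t-s}(x, y) λ_s(x)` is `F x + F (-x)` with `F x = g_{t-s}(y - x) λ_s(x)`, because
`λ_s` is odd; hence the half-line integral is `∫ F` over all of `ℝ`. Completing the square in the
exponent (`gaussDensity_mul_excursionEntranceLaw`, i.e. Bayes' rule for two Gaussians) shows that
`F x` is `t^{-1/2} s⁻¹ exp (-y² / (2t))` times `x` times the Gaussian density with mean `y s / t`
and variance `s (t - s) / t`. Its integral is therefore this constant times the mean `y s / t`,
which is `λ_t(y)`.
-/


open Real MeasureTheory

/-- The centered Gaussian density with variance `h`. -/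
noncomputable def gaussDensity (h u : ℝ) : ℝ :=
  (2 * π * h) ^ (-(1 : ℝ) / 2) * Real.exp (-(u ^ 2) / (2 * h))

/-- The transition density of Brownian motion killed on hitting `0`
(reflection principle). -/
noncomputable def killedBMDensity (h x y : ℝ) : ℝ :=
  gaussDensity h (y - x) - gaussDensity h (y + x)

/-- The entrance-law density of the Itô excursion measure for positive excursions
of Brownian motion. -/
noncomputable def excursionEntranceLaw (t x : ℝ) : ℝ :=
  x * t ^ (-(3 : ℝ) / 2) * Real.exp (-(x ^ 2) / (2 * t))

/-- Completing the square: as a function of `x`, `g_{t-s}(y - x) λ_s(x)` is a multiple of `x` times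
the density of the Brownian bridge from `(0, 0)` to `(t, y)` at time `s`. -/
lemma gaussDensity_mul_excursionEntranceLaw {s t : ℝ} (hs : 0 < s) (hst : s < t) (x y : ℝ)
    {v : NNReal} (hv : (v : ℝ) = s * (t - s) / t) :
    gaussDensity (t - s) (y - x) * excursionEntranceLaw s x =
      ((√t)⁻¹ * s⁻¹ * Real.exp (-(y ^ 2) / (2 * t))) *
        (ProbabilityTheory.gaussianPDFReal (y * s / t) v x * x) := by
  have ht : 0 < t := hs.trans hst
  have hh : 0 < t - s := sub_pos.2 hst
  have hexp : Real.exp (-((y - x) ^ 2) / (2 * (t - s))) * Real.exp (-(x ^ 2) / (2 * s)) =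
      Real.exp (-(y ^ 2) / (2 * t)) *
        Real.exp (-(x - y * s / t) ^ 2 / (2 * (s * (t - s) / t))) := by
    rw [← Real.exp_add, ← Real.exp_add]
    congr 1
    field_simp
    ring
  have h1 : (2 * π * (t - s)) ^ (-(1 : ℝ) / 2) = (√(2 * π * (t - s)))⁻¹ := by
    rw [neg_div, Real.rpow_neg (by positivity), Real.sqrt_eq_rpow]
  have h2 : s ^ (-(3 : ℝ) / 2) = s⁻¹ * (√s)⁻¹ := by
    rw [show (-(3 : ℝ) / 2) = -1 + -(1 / 2) by norm_num, Real.rpow_add hs, Real.rpow_neg hs.le,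
      Real.rpow_neg hs.le, Real.rpow_one, Real.sqrt_eq_rpow]
  have h3 : √(2 * π * (s * (t - s) / t)) = √(2 * π * (t - s)) * √s / √t := by
    rw [← Real.sqrt_mul (by positivity), ← Real.sqrt_div (by positivity)]
    congr 1
    ring
  have hsq : √t ≠ 0 := (Real.sqrt_pos.2 ht).ne'
  unfold gaussDensity excursionEntranceLaw ProbabilityTheory.gaussianPDFReal
  rw [hv, h1, h2, h3]
  calc _ = (√(2 * π * (t - s)))⁻¹ * (s⁻¹ * (√s)⁻¹) * x *
        (Real.exp (-((y - x) ^ 2) / (2 * (t - s))) * Real.exp (-(x ^ 2) / (2 * s))) := by ring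
    _ = _ := by
      rw [hexp, inv_div, div_eq_mul_inv, mul_inv]
      field_simp

/-- The Itô excursion entrance law is an entrance law for Brownian motion killed at `0`:
for `0 < s < t` and `y > 0`,
`∫_0^∞ q_{t-s}(x, y) λ_s(x) dx = λ_t(y)`. -/
theorem excursion_entrance_law_is_entrance_law
    (s t y : ℝ) (hs : 0 < s) (hst : s < t) (hy : 0 < y) :
    ∫ x in Set.Ioi (0 : ℝ), killedBMDensity (t - s) x y * excursionEntranceLaw s x
      = excursionEntranceLaw t y := by
  have ht : 0 < t := hs.trans hst
  have hh : 0 < t - s := sub_pos.2 hst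
  obtain ⟨v, hv⟩ : ∃ v : NNReal, (v : ℝ) = s * (t - s) / t :=
    ⟨⟨s * (t - s) / t, by positivity⟩, rfl⟩
  have hv0 : v ≠ 0 := by
    intro h
    have : 0 < s * (t - s) / t := by positivity
    rw [← hv, h] at this
    simp at this
  set F : ℝ → ℝ := fun x => gaussDensity (t - s) (y - x) * excursionEntranceLaw s x with hF
  have hFeq : F = fun x => ((√t)⁻¹ * s⁻¹ * Real.exp (-(y ^ 2) / (2 * t))) *
      (ProbabilityTheory.gaussianPDFReal (y * s / t) v x * x) :=
    funext fun x => gaussDensity_mul_excursionEntranceLaw hs hst x y hv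
  have hmean : ∫ x, ProbabilityTheory.gaussianPDFReal (y * s / t) v x * x = y * s / t := by
    have h := ProbabilityTheory.integral_gaussianReal_eq_integral_smul (μ := y * s / t)
      (f := fun x : ℝ => x) hv0
    rw [ProbabilityTheory.integral_id_gaussianReal] at h
    simpa only [smul_eq_mul] using h.symm
  -- A non-integrable function has Bochner integral `0`, but the mean `y s / t` is nonzero.
  have hint : Integrable F := by
    rw [hFeq]
    refine Integrable.const_mul (not_imp_comm.1 integral_undef ?_) _
    rw [hmean]
    positivity
  have hodd : ∀ x, killedBMDensity (t - s) x y * excursionEntranceLaw s x = F x + F (-x) := by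
    intro x
    simp only [hF, killedBMDensity, excursionEntranceLaw, neg_sq, sub_neg_eq_add]
    ring
  calc ∫ x in Set.Ioi (0 : ℝ), killedBMDensity (t - s) x y * excursionEntranceLaw s x
      = (∫ x in Set.Ioi (0 : ℝ), F x) + ∫ x in Set.Ioi (0 : ℝ), F (-x) := by
        simp_rw [hodd]
        exact integral_add hint.integrableOn hint.comp_neg.integrableOn
    _ = ∫ x, F x := by
        rw [integral_comp_neg_Ioi, neg_zero, add_comm]
        exact intervalIntegral.integral_Iic_add_Ioi hint.integrableOn hint.integrableOn
    _ = ((√t)⁻¹ * s⁻¹ * Real.exp (-(y ^ 2) / (2 * t))) * (y * s / t) := by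
        rw [hFeq, integral_const_mul, hmean]
    _ = excursionEntranceLaw t y := by
        have h2 : t ^ (-(3 : ℝ) / 2) = t⁻¹ * (√t)⁻¹ := by
          rw [show (-(3 : ℝ) / 2) = -1 + -(1 / 2) by norm_num, Real.rpow_add ht,
            Real.rpow_neg ht.le, Real.rpow_neg ht.le, Real.rpow_one, Real.sqrt_eq_rpow]
        rw [excursionEntranceLaw, h2]
        field_simp
end
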